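/- Let H and K be complex Hilbert spaces and let T_1, ..., T_n : H → K be bounded linear operators whose ranges are pairwise orthogonal (i.e. ⟨T_i u, T_j v⟩ = 0 for all i ≠ j and all u, v ∈ H). Then ‖∑_{i=1}^n T_i‖² ≤ 4 max_{i} ∑_{j=1}^n ‖T_i T_j^*‖, where ‖·‖ denotes the operator norm and T_j^* is the adjoint of T_j. -/

import Mathlib

/-!
Write `S = ∑ T i`, `a i j = ‖T i (T j)^*‖` and `M = max_i ∑_j a i j`. Orthogonality of the ranges
says `(T i)^* T j = 0` for `i ≠ j`, so `S^* S u = ∑ (T i)^* T i u` and `‖S u‖² = ∑ ‖T i u‖²`.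
Expanding the square,
`‖S^* S u‖² = ∑_{i,j} ⟪(T i)^* T i u, (T j)^* T j u⟫ ≤ ∑_{i,j} a i j ‖T i u‖ ‖T j u‖`,
and Schur's test for the symmetric matrix `a` bounds this by `M ∑ ‖T i u‖² = M ‖S u‖²`. Hence
`‖S u‖² = ⟪S^* S u, u⟫ ≤ √M ‖S u‖ ‖u‖`, that is `‖S u‖ ≤ √M ‖u‖`. This gives the estimate with
constant `1` in place of `4`.
-/

open scoped InnerProductSpace

/-- Schur's test for the quadratic form of a nonnegative symmetric matrix. -/
lemma schur_test_symm {ι : Type*} [Fintype ι] (a : ι → ι → ℝ) (ha : ∀ i j, 0 ≤ a i j)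
    (hsymm : ∀ i j, a i j = a j i) (M : ℝ) (hM : ∀ i, ∑ j, a i j ≤ M) (x : ι → ℝ) :
    ∑ i, ∑ j, a i j * (x i * x j) ≤ M * ∑ i, x i ^ 2 := by
  have h1 : ∑ i, ∑ j, a i j * x i ^ 2 ≤ M * ∑ i, x i ^ 2 := by
    rw [Finset.mul_sum]
    refine Finset.sum_le_sum fun i _ => ?_
    rw [← Finset.sum_mul]
    exact mul_le_mul_of_nonneg_right (hM i) (sq_nonneg _)
  have h2 : ∑ i, ∑ j, a i j * x j ^ 2 = ∑ i, ∑ j, a i j * x i ^ 2 := by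
    rw [Finset.sum_comm]
    simp only [fun i j => hsymm j i]
  have h3 : ∑ i, ∑ j, a i j * (x i * x j) ≤
      ∑ i, ∑ j, (a i j * x i ^ 2 / 2 + a i j * x j ^ 2 / 2) := by
    refine Finset.sum_le_sum fun i _ => Finset.sum_le_sum fun j _ => ?_
    nlinarith [mul_nonneg (ha i j) (sq_nonneg (x i - x j))]
  simp only [Finset.sum_add_distrib, ← Finset.sum_div] at h3
  linarith

section

variable {H K : Type*}
  [NormedAddCommGroup H] [InnerProductSpace ℂ H] [CompleteSpace H]
  [NormedAddCommGroup K] [InnerProductSpace ℂ K] [CompleteSpace K]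

lemma norm_comp_adjoint_comm (A B : H →L[ℂ] K) :
    ‖A.comp (ContinuousLinearMap.adjoint B)‖ = ‖B.comp (ContinuousLinearMap.adjoint A)‖ := by
  rw [← LinearIsometryEquiv.norm_map ContinuousLinearMap.adjoint
    (A.comp (ContinuousLinearMap.adjoint B)), ContinuousLinearMap.adjoint_comp,
    ContinuousLinearMap.adjoint_adjoint]

lemma norm_inner_adjoint_le (A B : H →L[ℂ] K) (v w : K) :
    ‖⟪ContinuousLinearMap.adjoint A v, ContinuousLinearMap.adjoint B w⟫_ℂ‖ ≤
      ‖A.comp (ContinuousLinearMap.adjoint B)‖ * (‖v‖ * ‖w‖) := by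
  rw [ContinuousLinearMap.adjoint_inner_left]
  calc ‖⟪v, A (ContinuousLinearMap.adjoint B w)⟫_ℂ‖
      ≤ ‖v‖ * ‖(A.comp (ContinuousLinearMap.adjoint B)) w‖ := norm_inner_le_norm _ _
    _ ≤ ‖v‖ * (‖A.comp (ContinuousLinearMap.adjoint B)‖ * ‖w‖) := by
        gcongr
        exact ContinuousLinearMap.le_opNorm _ _
    _ = _ := by ring

/-- Bounding `S^*` only on the range of `S = ∑ T i` avoids the projections onto the closures of the
ranges of the `T i`: the components of `S u` are the vectors `T i u` themselves. -/
lemma norm_adjoint_sum_apply_sq_le {ι : Type*} [Fintype ι] (T : ι → H →L[ℂ] K)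
    (horth : ∀ i j, i ≠ j → ∀ u v : H, ⟪T i u, T j v⟫_ℂ = 0) (M : ℝ)
    (hM : ∀ i, ∑ j, ‖(T i).comp (ContinuousLinearMap.adjoint (T j))‖ ≤ M) (u : H) :
    ‖ContinuousLinearMap.adjoint (∑ i, T i) ((∑ i, T i) u)‖ ^ 2 ≤ M * ‖(∑ i, T i) u‖ ^ 2 := by
  have hcross : ∀ i j, i ≠ j → ContinuousLinearMap.adjoint (T i) (T j u) = 0 := by
    intro i j hij
    refine ext_inner_right ℂ fun v => ?_
    rw [ContinuousLinearMap.adjoint_inner_left, horth j i hij.symm, inner_zero_left]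
  have hSS : ContinuousLinearMap.adjoint (∑ i, T i) ((∑ i, T i) u) =
      ∑ i, ContinuousLinearMap.adjoint (T i) (T i u) := by
    simp only [map_sum, sum_apply]
    rw [Finset.sum_comm]
    refine Finset.sum_congr rfl fun i _ => ?_
    exact Finset.sum_eq_single i (fun j _ hj => hcross i j hj.symm) (by simp)
  have hS : ‖(∑ i, T i) u‖ ^ 2 = ∑ i, ‖T i u‖ ^ 2 := by
    simp only [← inner_self_eq_norm_sq (𝕜 := ℂ), ← map_sum]
    rw [sum_apply, sum_inner]
    congr 1
    refine Finset.sum_congr rfl fun i _ => ?_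
    rw [inner_sum]
    exact Finset.sum_eq_single i (fun j _ hj => horth i j hj.symm u u) (by simp)
  rw [hS, hSS]
  refine le_trans ?_ (schur_test_symm _ (fun i j => norm_nonneg _)
    (fun i j => norm_comp_adjoint_comm (T i) (T j)) M hM fun i => ‖T i u‖)
  rw [← inner_self_eq_norm_sq (𝕜 := ℂ)]
  refine (RCLike.re_le_norm _).trans ?_
  rw [sum_inner]
  refine (norm_sum_le _ _).trans (Finset.sum_le_sum fun i _ => ?_)
  rw [inner_sum]
  exact (norm_sum_le _ _).trans (Finset.sum_le_sum fun j _ => norm_inner_adjoint_le _ _ _ _)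

/-- By Cauchy–Schwarz, `‖S u‖² = ⟪S^* S u, u⟫ ≤ ‖S^* S u‖ ‖u‖`, so it is enough to bound `S^*` on
the range of `S`. -/
lemma opNorm_sq_le_of_adjoint_apply (S : H →L[ℂ] K) (M : ℝ) (hM : 0 ≤ M)
    (h : ∀ u, ‖ContinuousLinearMap.adjoint S (S u)‖ ^ 2 ≤ M * ‖S u‖ ^ 2) : ‖S‖ ^ 2 ≤ M := by
  have hS : ‖S‖ ≤ √M := by
    refine S.opNorm_le_bound (Real.sqrt_nonneg _) fun u => ?_
    rcases (norm_nonneg (S u)).eq_or_lt with h0 | h0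
    · rw [← h0]
      positivity
    have h1 : ‖ContinuousLinearMap.adjoint S (S u)‖ ≤ √M * ‖S u‖ := by
      refine (sq_le_sq₀ (norm_nonneg _) (by positivity)).mp ?_
      rw [mul_pow, Real.sq_sqrt hM]
      exact h u
    have h2 : ‖S u‖ ^ 2 ≤ ‖ContinuousLinearMap.adjoint S (S u)‖ * ‖u‖ := by
      rw [← inner_self_eq_norm_sq (𝕜 := ℂ), ← ContinuousLinearMap.adjoint_inner_left]
      exact (RCLike.re_le_norm _).trans (norm_inner_le_norm _ _)
    refine le_of_mul_le_mul_right ?_ h0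
    nlinarith [mul_le_mul_of_nonneg_right h1 (norm_nonneg u)]
  calc ‖S‖ ^ 2 ≤ √M ^ 2 := by gcongr
    _ = M := Real.sq_sqrt hM

end

/-- The Cotlar–Stein / Schur-type estimate (19): if the ranges of `T_1, ..., T_n` are pairwise
orthogonal, then `‖∑ T_i‖² ≤ 4 max_i ∑_j ‖T_i T_j^*‖`. -/
theorem opNorm_sum_sq_le_of_orthogonal_ranges {H K : Type*}
    [NormedAddCommGroup H] [InnerProductSpace ℂ H] [CompleteSpace H]
    [NormedAddCommGroup K] [InnerProductSpace ℂ K] [CompleteSpace K]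
    (n : ℕ) (hn : 1 ≤ n) (T : Fin n → H →L[ℂ] K)
    (horth : ∀ i j, i ≠ j → ∀ u v : H, ⟪T i u, T j v⟫_ℂ = 0) :
    ‖∑ i, T i‖ ^ 2 ≤
      4 * ⨆ i, ∑ j, ‖(T i).comp (ContinuousLinearMap.adjoint (T j))‖ := by
  have hM : ∀ i, ∑ j, ‖(T i).comp (ContinuousLinearMap.adjoint (T j))‖ ≤
      ⨆ i, ∑ j, ‖(T i).comp (ContinuousLinearMap.adjoint (T j))‖ :=
    le_ciSup (Set.finite_range _).bddAbove
  have hM0 : 0 ≤ ⨆ i, ∑ j, ‖(T i).comp (ContinuousLinearMap.adjoint (T j))‖ :=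
    Real.iSup_nonneg fun i => Finset.sum_nonneg fun j _ => norm_nonneg _
  have := opNorm_sq_le_of_adjoint_apply (∑ i, T i) _ hM0
    (norm_adjoint_sum_apply_sq_le T horth _ hM)
  linarith
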